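/- Let V be a nonzero finite-dimensional real inner product space and Φ ⊆ V a finite crystallographic root system spanning V with base F and Weyl group W. Then the following are equivalent: (i) Φ is irreducible; (ii) for every proper subset P ⊊ F the cone W_P·C = ⋃_{w ∈ W_P} w(C) is non-degenerate, i.e. (W_P·C) ∩ (−W_P·C) = {0}; (iii) there exists a maximal proper subset P ⊊ F (i.e. with |P| = |F| − 1) such that W_P·C is non-degenerate. -/

import Mathlib

open scoped RealInnerProductSpace

section helpers
variable {V : Type*} [NormedAddCommGroup V] [InnerProductSpace ℝ V]

lemma aux_dual [FiniteDimensional ℝ V] (F : Finset V)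
    (hFind : LinearIndependent ℝ (fun β : F => (β : V)))
    (hsp : Submodule.span ℝ (F : Set V) = ⊤) (f : V → ℝ) :
    ∃ ω : V, ∀ β ∈ F, ⟪ω, β⟫ = f β := by
  let b := Module.Basis.mk hFind (by simp [hsp])
  refine ⟨(InnerProductSpace.toDual ℝ V).symm
    (b.constr ℝ (fun β : F => f β)).toContinuousLinearMap, fun β hβ => ?_⟩
  rw [InnerProductSpace.toDual_symm_apply]
  have h := b.constr_basis ℝ (fun β : F => f β) ⟨β, hβ⟩
  have h2 : b ⟨β, hβ⟩ = β := by simp [b]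
  rw [h2] at h
  exact h

lemma aux_pos (F : Finset V)
    (hFind : LinearIndependent ℝ (fun β : F => (β : V)))
    (hob : ∀ α ∈ F, ∀ β ∈ F, α ≠ β → ⟪α, β⟫ ≤ 0)
    (hirr : ¬ ∃ F₁ F₂ : Finset V, (F₁ : Set V) ∪ (F₂ : Set V) = (F : Set V) ∧ F₁.Nonempty ∧
      F₂.Nonempty ∧ Disjoint F₁ F₂ ∧ ∀ α ∈ F₁, ∀ β ∈ F₂, ⟪α, β⟫ = 0)
    (c : V → ℝ) (hnn : ∀ β ∈ F, 0 ≤ ⟪∑ α ∈ F, c α • α, β⟫)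
    (hne : ∑ α ∈ F, c α • α ≠ 0) : ∀ β ∈ F, 0 < c β := by
  classical
  have h0 : ∀ β ∈ F, 0 ≤ c β := by
    let n := ∑ β ∈ F, (c β)⁻ • β
    have h1 : 0 ≤ ⟪∑ α ∈ F, c α • α, n⟫ := by
      simp only [n, inner_sum, inner_smul_right]
      exact Finset.sum_nonneg fun β hβ => mul_nonneg (negPart_nonneg _) (hnn β hβ)
    have h2 : ∑ α ∈ F, c α • α = ∑ α ∈ F, (c α)⁺ • α - n := by
      simp only [n, ← Finset.sum_sub_distrib, ← sub_smul, posPart_sub_negPart]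
    have h3 : ⟪∑ α ∈ F, (c α)⁺ • α, n⟫ ≤ 0 := by
      simp only [n, inner_sum, inner_smul_right, sum_inner, inner_smul_left]
      refine Finset.sum_nonpos fun β hβ => ?_
      simp only [RCLike.conj_to_real]
      rw [Finset.mul_sum]
      refine Finset.sum_nonpos fun α hα => ?_
      by_cases h : α = β
      · subst h
        rcases le_total 0 (c α) with h | h
        · rw [negPart_eq_zero.2 h]; simp
        · rw [posPart_eq_zero.2 h]; simp
      · exact mul_nonpos_of_nonneg_of_nonpos (negPart_nonneg _)
          (mul_nonpos_of_nonneg_of_nonpos (posPart_nonneg _) (hob α hα β hβ h))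
    have h4 : n = 0 := by
      rw [h2, inner_sub_left] at h1
      have := real_inner_self_nonneg (x := n)
      exact inner_self_eq_zero (𝕜 := ℝ).1 (by linarith)
    intro β hβ
    have := linearIndependent_iff'.1 hFind Finset.univ (fun β => (c β)⁻)
      (by rw [← h4]; exact Finset.sum_coe_sort F (fun β => (c β)⁻ • β)) ⟨β, hβ⟩ (Finset.mem_univ _)
    exact negPart_eq_zero.1 this
  have hZ : ∀ β ∈ F, c β = 0 → ∀ α ∈ F, c α ≠ 0 → ⟪α, β⟫ = 0 := by
    intro β hβ hcβ α hα hcα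
    have h1 := hnn β hβ
    simp only [sum_inner, inner_smul_left, RCLike.conj_to_real] at h1
    have h2 : ∀ α ∈ F, c α * ⟪α, β⟫ ≤ 0 := by
      intro α hα
      by_cases h : α = β
      · simp [h, hcβ]
      · exact mul_nonpos_of_nonneg_of_nonpos (h0 α hα) (hob α hα β hβ h)
    have h3 := (Finset.sum_eq_zero_iff_of_nonpos h2).1 (le_antisymm (Finset.sum_nonpos h2) h1) α hα
    exact (mul_eq_zero.1 h3).resolve_left hcα
  intro β hβ
  by_contra hcon
  have hcβ : c β = 0 := le_antisymm (not_lt.1 hcon) (h0 β hβ)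
  refine hirr ⟨F.filter (fun x => c x ≠ 0), F.filter (fun x => c x = 0), ?_, ?_, ⟨β, by simp [*]⟩,
    ?_, ?_⟩
  · ext x; simp; tauto
  · by_contra h
    rw [Finset.not_nonempty_iff_eq_empty, Finset.filter_eq_empty_iff] at h
    apply hne
    refine Finset.sum_eq_zero fun x hx => ?_
    have := h hx
    rw [not_not] at this
    simp [this]
  · rw [Finset.disjoint_left]; simp; tauto
  · intro α hα β hβ
    simp only [Finset.mem_filter] at hα hβ
    exact hZ β hβ.1 hβ.2 α hα.1 hα.2
end helpers

/-- let `V ≠ 0` be a finite-dimensional real inner product space and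
`Φ ⊆ V` a finite crystallographic root system spanning `V`, with base `F`, Weyl
chamber `C` and reflections `s α`.  For `P ⊆ F` the set `orb P = W_P·C` is the union
of the images of `C` under words in the reflections `s α`, `α ∈ P` (reflections are
involutions, so the monoid closure equals the parabolic subgroup `W_P`).
Then TFAE: (i) `Φ` is irreducible (no orthogonal partition of `F`);
(ii) `W_P·C` is non-degenerate for every proper `P ⊊ F`;
(iii) `W_P·C` is non-degenerate for some maximal proper `P ⊊ F`. -/
theorem stmt_0 {V : Type*} [NormedAddCommGroup V] [InnerProductSpace ℝ V]
    [FiniteDimensional ℝ V] (hV : 0 < Module.finrank ℝ V)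
    (Φ : Set V) (hΦfin : Φ.Finite) (hΦ0 : (0 : V) ∉ Φ)
    (hΦspan : Submodule.span ℝ Φ = ⊤)
    (s : V → V → V)
    (hs : ∀ α ∈ Φ, ∀ v : V, s α v = v - (2 * ⟪α, v⟫ / ⟪α, α⟫) • α)
    (hΦinv : ∀ α ∈ Φ, ∀ γ ∈ Φ, s α γ ∈ Φ)
    (hcrys : ∀ α ∈ Φ, ∀ γ ∈ Φ, ∃ m : ℤ, (m : ℝ) = 2 * ⟪α, γ⟫ / ⟪α, α⟫)
    (hred : ∀ α ∈ Φ, ∀ c : ℝ, c • α ∈ Φ → c = 1 ∨ c = -1)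
    (F : Finset V) (hFΦ : (F : Set V) ⊆ Φ)
    (hFind : LinearIndependent ℝ (fun β : F => (β : V)))
    (hbase : ∀ α ∈ Φ, ∃ c : V → ℤ, ((∀ β ∈ F, 0 ≤ c β) ∨ (∀ β ∈ F, c β ≤ 0)) ∧
        α = ∑ β ∈ F, (c β : ℝ) • β)
    (C : Set V) (hC : C = {v : V | ∀ β ∈ F, 0 ≤ ⟪β, v⟫})
    (orb : Finset V → Set V)
    (horb : ∀ P : Finset V, orb P =
      {v : V | ∃ w ∈ Submonoid.closure {f : Function.End V | ∃ α ∈ P, f = s α},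
        ∃ u ∈ C, (w : V → V) u = v}) :
    List.TFAE
      [ ¬ ∃ F₁ F₂ : Finset V, (F₁ : Set V) ∪ (F₂ : Set V) = (F : Set V) ∧ F₁.Nonempty ∧ F₂.Nonempty ∧
          Disjoint F₁ F₂ ∧ ∀ α ∈ F₁, ∀ β ∈ F₂, ⟪α, β⟫ = 0,
        ∀ P : Finset V, P ⊂ F → orb P ∩ (-orb P) = {0},
        ∃ P : Finset V, P ⊂ F ∧ P.card = F.card - 1 ∧ orb P ∩ (-orb P) = {0} ] := by
  classical
  have hαα : ∀ α ∈ Φ, 0 < ⟪α, α⟫ := by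
    intro α hα
    exact real_inner_self_pos.2 (fun h => hΦ0 (h ▸ hα))
  have hFsp : Submodule.span ℝ (F : Set V) = ⊤ := by
    rw [eq_top_iff, ← hΦspan, Submodule.span_le]
    intro α hα
    obtain ⟨c, -, rfl⟩ := hbase α hα
    exact Submodule.sum_mem _ fun β hβ => Submodule.smul_mem _ _ (Submodule.subset_span hβ)
  have hFne : F.Nonempty := by
    rw [Finset.nonempty_iff_ne_empty]
    rintro rfl
    have : Subsingleton V := by
      rw [← Submodule.subsingleton_iff ℝ, ← subsingleton_iff_bot_eq_top]
      simpa using hFsp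
    rw [Module.finrank_zero_of_subsingleton] at hV
    exact lt_irrefl _ hV
  have hob : ∀ α ∈ F, ∀ β ∈ F, α ≠ β → ⟪α, β⟫ ≤ 0 := by
    intro α hα β hβ hne
    obtain ⟨c, hc, he⟩ := hbase _ (hΦinv α (hFΦ hα) β (hFΦ hβ))
    rw [hs α (hFΦ hα)] at he
    set m := 2 * ⟪α, β⟫ / ⟪α, α⟫ with hm
    have key : ∀ x ∈ F, (c x : ℝ) - ((if x = β then 1 else 0) - (if x = α then m else 0)) = 0 := by
      intro x hx
      refine linearIndependent_iff'.1 hFind Finset.univ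
        (fun x => (c x : ℝ) - ((if (x : V) = β then 1 else 0) - (if (x : V) = α then m else 0)))
        ?_ ⟨x, hx⟩ (Finset.mem_univ _)
      rw [Finset.sum_coe_sort F
        (fun x => ((c x : ℝ) - ((if x = β then 1 else 0) - (if x = α then m else 0))) • x)]
      simp only [sub_smul, Finset.sum_sub_distrib, ite_smul, zero_smul, one_smul]
      rw [← he]
      simp [hα, hβ]
    have k1 := key β hβ
    have k2 := key α hα
    simp only [if_true, if_neg hne, if_neg hne.symm] at k1 k2
    have hm0 : m ≤ 0 := by
      rcases hc with hc | hc
      · have : (0 : ℝ) ≤ c α := by exact_mod_cast hc α hα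
        linarith
      · have : (c β : ℝ) ≤ 0 := by exact_mod_cast hc β hβ
        linarith
    by_contra hcon
    have : 0 < m := div_pos (by linarith) (hαα α (hFΦ hα))
    linarith
  have h0orb : ∀ P : Finset V, (0 : V) ∈ orb P := by
    intro P
    rw [horb, hC]
    exact ⟨1, Submonoid.one_mem _, 0, by simp, rfl⟩
  have hinvol : ∀ α ∈ Φ, ∀ v, s α (s α v) = v := by
    intro α hα v
    rw [hs α hα, hs α hα]
    have := (hαα α hα).ne'
    rw [inner_sub_right, inner_smul_right, sub_sub, ← add_smul]
    have h : 2 * ⟪α, v⟫ / ⟪α, α⟫ + 2 * (⟪α, v⟫ - 2 * ⟪α, v⟫ / ⟪α, α⟫ * ⟪α, α⟫) / ⟪α, α⟫ = 0 := by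
      field_simp
      ring
    rw [h]; simp
  have hsα : ∀ α ∈ Φ, s α α = -α := by
    intro α hα
    rw [hs α hα, mul_div_assoc, div_self (hαα α hα).ne', mul_one, two_smul]
    abel
  have hdeg : ∀ P F₁ : Finset V, P ⊆ F → F₁ ⊆ P → F₁.Nonempty →
      (∀ β ∈ F, β ∉ F₁ → ∀ α ∈ F₁, ⟪β, α⟫ = 0) → orb P ∩ (-orb P) ≠ {0} := by
    rintro P F₁ hPF hFP ⟨α, hα⟩ hort heq
    obtain ⟨ρ, hρ⟩ := aux_dual F hFind hFsp (fun _ => 1)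
    let M := Submonoid.closure {f : Function.End V | ∃ α ∈ P, f = s α}
    let S : Set V := {x | x ∈ Φ ∧ x ∈ Submodule.span ℝ (F₁ : Set V) ∧ ∃ w ∈ M, (w : V → V) x = α}
    have hαΦ : α ∈ Φ := hFΦ (hPF (hFP hα))
    have hSf : S.Finite := hΦfin.subset fun x hx => hx.1
    have hSn : S.Nonempty := ⟨α, hαΦ, Submodule.subset_span hα, 1, Submonoid.one_mem _, rfl⟩
    obtain ⟨x, hxS, hmax⟩ := Set.exists_max_image S (fun x => ⟪ρ, x⟫) hSf hSn
    obtain ⟨hxΦ, hxsp, w, hw, hwx⟩ := hxS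
    have hxC : x ∈ C := by
      rw [hC]
      intro β hβ
      by_cases hβ1 : β ∈ F₁
      · by_contra hcon
        rw [not_le] at hcon
        have hβΦ : β ∈ Φ := hFΦ hβ
        have hmem : s β x ∈ S := by
          refine ⟨hΦinv β hβΦ x hxΦ, ?_, w * (show Function.End V from s β),
            Submonoid.mul_mem _ hw (Submonoid.subset_closure ⟨β, hFP hβ1, rfl⟩), ?_⟩
          · rw [hs β hβΦ]
            exact Submodule.sub_mem _ hxsp
              (Submodule.smul_mem _ _ (Submodule.subset_span hβ1))
          · change w (s β (s β x)) = α
            rw [hinvol β hβΦ, hwx]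
        have h1 := hmax _ hmem
        rw [hs β hβΦ, inner_sub_right, inner_smul_right, hρ β hβ] at h1
        have h2 : 2 * ⟪β, x⟫ / ⟪β, β⟫ < 0 := div_neg_of_neg_of_pos (by linarith) (hαα β hβΦ)
        linarith
      · have : x ∈ (ℝ ∙ β)ᗮ := by
          refine (Submodule.span_le.2 ?_) hxsp
          intro a ha
          exact Submodule.mem_orthogonal_singleton_iff_inner_right.2 (hort β hβ hβ1 a ha)
        exact (Submodule.mem_orthogonal_singleton_iff_inner_right.1 this).ge
    have hmem : α ∈ orb P ∩ (-orb P) := by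
      constructor
      · rw [horb]
        exact ⟨w, hw, x, hxC, hwx⟩
      · rw [Set.mem_neg, horb]
        refine ⟨(show Function.End V from s α) * w,
          Submonoid.mul_mem _ (Submonoid.subset_closure ⟨α, hFP hα, rfl⟩) hw, x, hxC, ?_⟩
        change s α (w x) = -α
        rw [hwx, hsα α hαΦ]
    rw [heq] at hmem
    exact hΦ0 (hmem ▸ hαΦ)
  tfae_have 1 → 2 := by
    intro hirr P hP
    apply Set.Subset.antisymm
    swap
    · rintro _ rfl
      exact ⟨h0orb P, by simpa using h0orb P⟩
    rintro v ⟨hv, hv'⟩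
    rw [Set.mem_neg] at hv'
    rw [horb] at hv hv'
    obtain ⟨w, hw, u, hu, hwu⟩ := hv
    obtain ⟨w', hw', u', hu', hwu'⟩ := hv'
    obtain ⟨γ, hγF, hγP⟩ := Finset.exists_of_ssubset hP
    obtain ⟨ω, hω⟩ := aux_dual F hFind hFsp (fun β => if β = γ then 1 else 0)
    have hfix : ∀ f ∈ Submonoid.closure {f : Function.End V | ∃ α ∈ P, f = s α},
        (∀ v, ⟪ω, (f : V → V) v⟫ = ⟪ω, v⟫) ∧ (f : V → V) 0 = 0 := by
      intro f hf
      induction hf using Submonoid.closure_induction with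
      | mem f hf =>
        obtain ⟨α, hα, rfl⟩ := hf
        have hαF := hP.1 hα
        have hne : α ≠ γ := fun h => hγP (h ▸ hα)
        refine ⟨fun v => ?_, ?_⟩
        · rw [hs α (hFΦ hαF), inner_sub_right, inner_smul_right, hω α hαF]
          simp [hne]
        · rw [hs α (hFΦ hαF)]; simp
      | one => exact ⟨fun _ => rfl, rfl⟩
      | mul f g _ _ hf hg =>
        refine ⟨fun v => ?_, ?_⟩
        · change ⟪ω, f (g v)⟫ = _
          rw [hf.1, hg.1]
        · change f (g 0) = 0
          rw [hg.2, hf.2]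
    obtain ⟨c, -, hc⟩ := Submodule.mem_span_finset.1 (show ω ∈ Submodule.span ℝ (F : Set V) by rw [hFsp]; trivial)
    have hpos : ∀ β ∈ F, 0 < c β := by
      refine aux_pos F hFind hob hirr c ?_ ?_
      · intro β hβ
        rw [hc, hω β hβ]
        split_ifs <;> norm_num
      · rw [hc]
        rintro rfl
        simpa using hω γ hγF
    rw [hC] at hu hu'
    have hterm : ∀ u : V, (∀ β ∈ F, 0 ≤ ⟪β, u⟫) → ∀ β ∈ F, 0 ≤ c β * ⟪β, u⟫ :=
      fun u hu β hβ => mul_nonneg (hpos β hβ).le (hu β hβ)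
    have hexp : ∀ u : V, ⟪ω, u⟫ = ∑ β ∈ F, c β * ⟪β, u⟫ := by
      intro u
      rw [← hc, sum_inner]
      simp [inner_smul_left]
    have e1 : 0 ≤ ⟪ω, u⟫ := by rw [hexp]; exact Finset.sum_nonneg (hterm u hu)
    have e2 : 0 ≤ ⟪ω, u'⟫ := by rw [hexp]; exact Finset.sum_nonneg (hterm u' hu')
    rw [← (hfix w hw).1, hwu] at e1
    rw [← (hfix w' hw').1, hwu', inner_neg_right] at e2
    have e3 : ⟪ω, u⟫ = 0 := by
      rw [← (hfix w hw).1, hwu]; linarith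
    rw [hexp] at e3
    have e4 := (Finset.sum_eq_zero_iff_of_nonneg (hterm u hu)).1 e3
    have hu0 : u = 0 := by
      have : (F : Set V) ⊆ ((ℝ ∙ u)ᗮ : Submodule ℝ V) := by
        intro β hβ
        rw [SetLike.mem_coe, Submodule.mem_orthogonal_singleton_iff_inner_left]
        exact (mul_eq_zero.1 (e4 β hβ)).resolve_left (hpos β hβ).ne'
      have h2 := Submodule.span_le.2 this (show u ∈ Submodule.span ℝ (F : Set V) by
        rw [hFsp]; trivial)
      rw [Submodule.mem_orthogonal_singleton_iff_inner_left] at h2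
      exact inner_self_eq_zero (𝕜 := ℝ).1 h2
    rw [Set.mem_singleton_iff, ← hwu, hu0, (hfix w hw).2]
  tfae_have 2 → 3 := by
    intro h
    obtain ⟨γ, hγ⟩ := hFne
    exact ⟨F.erase γ, Finset.erase_ssubset hγ, Finset.card_erase_of_mem hγ,
      h _ (Finset.erase_ssubset hγ)⟩
  tfae_have 3 → 1 := by
    rintro ⟨P, hP, hcard, hnd⟩ ⟨F₁, F₂, hun, h1, h2, hdis, hort⟩
    have hun' : F₁ ∪ F₂ = F := by
      apply Finset.coe_injective
      rw [Finset.coe_union, hun]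
    obtain ⟨γ, hγF, hγP⟩ := Finset.exists_of_ssubset hP
    have hPe : P = F.erase γ := by
      apply Finset.eq_of_subset_of_card_le
      · intro x hx
        exact Finset.mem_erase.2 ⟨fun h => hγP (h ▸ hx), hP.1 hx⟩
      · rw [Finset.card_erase_of_mem hγF, hcard]
    have hsub : ∀ G : Finset V, G ⊆ F → γ ∉ G → G ⊆ P := by
      intro G hG hγ x hx
      rw [hPe]
      exact Finset.mem_erase.2 ⟨fun h => hγ (h ▸ hx), hG hx⟩
    have hF1 : F₁ ⊆ F := hun' ▸ Finset.subset_union_left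
    have hF2 : F₂ ⊆ F := hun' ▸ Finset.subset_union_right
    by_cases hγ1 : γ ∈ F₁
    · have hγ2 : γ ∉ F₂ := Finset.disjoint_left.1 hdis hγ1
      refine hdeg P F₂ hP.1 (hsub F₂ hF2 hγ2) h2 ?_ hnd
      intro β hβ hβ2 α hα
      rw [← hun', Finset.mem_union] at hβ
      exact hort β (hβ.resolve_right hβ2) α hα
    · refine hdeg P F₁ hP.1 (hsub F₁ hF1 hγ1) h1 ?_ hnd
      intro β hβ hβ1 α hα
      rw [← hun', Finset.mem_union] at hβ
      rw [real_inner_comm]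
      exact hort α hα β (hβ.resolve_left hβ1)
  tfae_finish
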